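/- Let σ > 0 and N ≥ 2 an integer, assume Π⁺ is continuously differentiable on (m, M), that Ψ⁺ₓ(M) = lim_{x→M⁻} (d/dx)Ψ⁺(x) = 1, and that there exist an integer n ≥ 1 and a real constant k ∈ (0, ∞) such that lim_{x→M⁻} (Ψ⁺(x) − x)/(M − x)^{n+1} = 1/k. Let R : ℝ → [m, M] be a nondecreasing solution of equation (C⁺) with R(x) < M for all x and lim_{x→∞} R(x) = M. Then M − R(x) ∼ ((N/(N−1))·(n/k))^{−1/n}·(log x)^{−1/n} as x → ∞, i.e. the ratio of the two sides converges to 1. -/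

import Mathlib

open MeasureTheory Filter Set

/-- Centered Gaussian density with variance `σ²`. -/
noncomputable def gq (σ z : ℝ) : ℝ :=
  Real.exp (-(z ^ 2) / (2 * σ ^ 2)) / (σ * Real.sqrt (2 * Real.pi))

/-- The averaged kernel `q̄(σ,x,z)`. -/
noncomputable def gqbar (σ x z : ℝ) : ℝ :=
  if x = 0 then gq σ z else (1 / x) * ∫ y in (0:ℝ)..x, gq σ (y - z)

/-- `Φ⁺(y) = E[V·1_{V>y}]`. -/
noncomputable def Phip {Ω : Type*} [MeasurableSpace Ω] (P : Measure Ω) (V : Ω → ℝ) (y : ℝ) : ℝ :=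
  ∫ ω in {ω | V ω > y}, V ω ∂P

/-- `Π⁺(y) = P(V > y)`. -/
noncomputable def Pip {Ω : Type*} [MeasurableSpace Ω] (P : Measure Ω) (V : Ω → ℝ) (y : ℝ) : ℝ :=
  (P {ω | V ω > y}).toReal

/-- `Φ⁻(y) = E[V·1_{V≤y}]`. -/
noncomputable def Phim {Ω : Type*} [MeasurableSpace Ω] (P : Measure Ω) (V : Ω → ℝ) (y : ℝ) : ℝ :=
  ∫ ω in {ω | V ω ≤ y}, V ω ∂P

/-- `Π⁻(y) = P(V ≤ y)`. -/
noncomputable def Pim {Ω : Type*} [MeasurableSpace Ω] (P : Measure Ω) (V : Ω → ℝ) (y : ℝ) : ℝ :=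
  (P {ω | V ω ≤ y}).toReal

/-- `Ψ⁺ = Φ⁺/Π⁺`. -/
noncomputable def Psip {Ω : Type*} [MeasurableSpace Ω] (P : Measure Ω) (V : Ω → ℝ) (y : ℝ) : ℝ :=
  Phip P V y / Pip P V y

/-- `Ψ⁻ = Φ⁻/Π⁻`. -/
noncomputable def Psim {Ω : Type*} [MeasurableSpace Ω] (P : Measure Ω) (V : Ω → ℝ) (y : ℝ) : ℝ :=
  Phim P V y / Pim P V y

/-- `φ⁺_g`. -/
noncomputable def phip {Ω : Type*} [MeasurableSpace Ω] (P : Measure Ω) (V : Ω → ℝ)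
    (σ : ℝ) (g : ℝ → ℝ) (x : ℝ) : ℝ :=
  (∫ z, Phip P V (g z) * gq σ (x - z)) / (∫ z, Pip P V (g z) * gq σ (x - z))

/-- `φ⁻_g`. -/
noncomputable def phim {Ω : Type*} [MeasurableSpace Ω] (P : Measure Ω) (V : Ω → ℝ)
    (σ : ℝ) (g : ℝ → ℝ) (x : ℝ) : ℝ :=
  (∫ z, Phim P V (g z) * gq σ (x - z)) / (∫ z, Pim P V (g z) * gq σ (x - z))

/-- `φ_g`, equal to `φ⁺_g` on `[0,∞)` and `φ⁻_g` on `(−∞,0)`. -/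
noncomputable def phig {Ω : Type*} [MeasurableSpace Ω] (P : Measure Ω) (V : Ω → ℝ)
    (σ : ℝ) (g : ℝ → ℝ) (x : ℝ) : ℝ :=
  if 0 ≤ x then phip P V σ g x else phim P V σ g x

/-- The interior of the support of the law of `V` is `(m, M)` (with `V` bounded). -/
def SuppIoo {Ω : Type*} [MeasurableSpace Ω] (P : Measure Ω) (V : Ω → ℝ) (m M : ℝ) : Prop :=
  m < M ∧ (∀ᵐ ω ∂P, V ω ∈ Set.Icc m M) ∧
    (∀ y < M, 0 < P {ω | V ω > y}) ∧ (∀ y, m < y → 0 < P {ω | V ω ≤ y})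

/-- Equation (E). -/
def SolvesE {Ω : Type*} [MeasurableSpace Ω] (P : Measure Ω) (V : Ω → ℝ)
    (σ : ℝ) (N : ℕ) (F : ℝ → ℝ) : Prop :=
  ∀ x : ℝ, F x =
    ∫ z, ((1 / (N:ℝ)) * gq σ (x - z) + (((N:ℝ) - 1) / (N:ℝ)) * gqbar σ x z) * phig P V σ F z

/-- Equation (C⁺). -/
def SolvesCp {Ω : Type*} [MeasurableSpace Ω] (P : Measure Ω) (V : Ω → ℝ)
    (σ : ℝ) (N : ℕ) (R : ℝ → ℝ) : Prop :=
  ∀ x : ℝ, R x =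
    (∫ z in Set.Ioi (0:ℝ),
      ((1 / (N:ℝ)) * gq σ (x - z) + (((N:ℝ) - 1) / (N:ℝ)) * gqbar σ x z) *
        ∫ y, Psip P V (R y) * gq σ (z - y)) +
    (∫ ω, V ω ∂P) *
      ∫ z in Set.Iio (0:ℝ),
        ((1 / (N:ℝ)) * gq σ (x - z) + (((N:ℝ) - 1) / (N:ℝ)) * gqbar σ x z)

/-!
Write `r = 1/N`. The gap `D = M - R` satisfies `D = r S + (1 - r) A`, where `S` is
`U = M - Ψ⁺ ∘ R` smoothed twice by the Gaussian and `A x = (1/x) ∫₀ˣ S`, so that `x A' = -(A - S)`.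
By Chebyshev's inequality smoothing shifts the argument by at most `√x`, up to an error `O(1/x)`,
and `D - U = Ψ⁺(R) - R ~ D^(n+1) / k`. Hence `B = A - S` satisfies the recursion
`B x ≈ r B (x ± √x) + A^(n+1) / k`, which contracts because `r < 1`.

A first pass through the recursion gives `B = o(A)`, that is, `log A = o(log x)`; so `D ~ A`, and
both the shift by `√x` and the error terms are negligible against every power of `A`. A second pass
gives `(1 - r) B ~ A^(n+1) / k`. Therefore `x (A^(-n))' → n / (k (1 - r)) = (N / (N - 1)) (n / k)`,
and integrating against `dx / x = d(log x)` yields the claim.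
-/

open Topology

section RunningMean

/-- The mean of `f` over `[0, x]`, through which the kernel `q̄` acts on functions. -/
noncomputable def runningMean (f : ℝ → ℝ) (x : ℝ) : ℝ := ⨍ y in (0 : ℝ)..x, f y

lemma runningMean_eq_div (f : ℝ → ℝ) (x : ℝ) : runningMean f x = (∫ y in (0 : ℝ)..x, f y) / x := by
  rw [runningMean, interval_average_eq_div, sub_zero]

lemma mul_runningMean (f : ℝ → ℝ) {x : ℝ} (hx : x ≠ 0) :
    x * runningMean f x = ∫ y in (0 : ℝ)..x, f y := by
  rw [runningMean_eq_div, mul_div_cancel₀ _ hx]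

lemma runningMean_eq_integral_comp_mul (f : ℝ → ℝ) {x : ℝ} (hx : x ≠ 0) :
    runningMean f x = ∫ t in (0 : ℝ)..1, f (x * t) := by
  rw [intervalIntegral.integral_comp_mul_left f hx, mul_zero, mul_one, smul_eq_mul,
    runningMean_eq_div, div_eq_inv_mul]

lemma runningMean_const_sub (c : ℝ) {f : ℝ → ℝ} {x : ℝ} (hx : x ≠ 0)
    (hf : IntervalIntegrable f volume 0 x) :
    runningMean (fun y ↦ c - f y) x = c - runningMean f x := by
  simp only [runningMean_eq_div]
  rw [intervalIntegral.integral_sub intervalIntegrable_const hf, intervalIntegral.integral_const,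
    sub_zero, smul_eq_mul, sub_div, mul_div_cancel_left₀ _ hx]

/-- The excess of the running mean over the function itself. -/
noncomputable def meanExcess (f : ℝ → ℝ) (x : ℝ) : ℝ := runningMean f x - f x

variable {f : ℝ → ℝ}

lemma antitoneOn_runningMean (hf : Antitone f) : AntitoneOn (runningMean f) (Ioi 0) := by
  have scaled_antitone {x : ℝ} (hx : 0 < x) : Antitone fun t ↦ f (x * t) :=
    fun s t hst ↦ hf (mul_le_mul_of_nonneg_left hst hx.le)
  intro x hx y hy hxy
  rw [runningMean_eq_integral_comp_mul f (ne_of_gt hx),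
    runningMean_eq_integral_comp_mul f (ne_of_gt hy)]
  exact intervalIntegral.integral_mono_on zero_le_one (scaled_antitone hy).intervalIntegrable
    (scaled_antitone hx).intervalIntegrable
    fun t ht ↦ hf (mul_le_mul_of_nonneg_right hxy ht.1)

lemma le_runningMean (hf : Antitone f) {x : ℝ} (hx : 0 < x) : f x ≤ runningMean f x := by
  have h : ∫ _ in (0 : ℝ)..x, f x ≤ ∫ y in (0 : ℝ)..x, f y :=
    intervalIntegral.integral_mono_on hx.le intervalIntegrable_const hf.intervalIntegrable
      fun y hy ↦ hf hy.2
  rw [intervalIntegral.integral_const, sub_zero, smul_eq_mul, ← mul_runningMean f hx.ne'] at h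
  exact le_of_mul_le_mul_left h hx

lemma runningMean_sub_le (hf0 : ∀ t, 0 ≤ f t) {x y : ℝ} (hx : 0 < x) (hxy : x ≤ y)
    (hf : IntervalIntegrable f volume 0 y) :
    runningMean f x - runningMean f y ≤ (y - x) / x * runningMean f y := by
  have h : x * runningMean f x ≤ y * runningMean f y := by
    rw [mul_runningMean f hx.ne', mul_runningMean f (hx.trans_le hxy).ne']
    exact intervalIntegral.integral_mono_interval le_rfl hx.le hxy
      (Eventually.of_forall hf0) hf
  rw [div_mul_eq_mul_div, le_div_iff₀ hx]
  linarith

lemma hasDerivAt_runningMean (hf : Continuous f) {x : ℝ} (hx : x ≠ 0) :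
    HasDerivAt (runningMean f) (-meanExcess f x / x) x := by
  have h := (hf.integral_hasStrictDerivAt 0 x).hasDerivAt.div (hasDerivAt_id x) hx
  refine (h.congr_of_eventuallyEq
    (Eventually.of_forall fun y ↦ runningMean_eq_div f y)).congr_deriv ?_
  rw [← mul_runningMean f hx, id, meanExcess]
  field_simp
  ring

end RunningMean

section Asymptotics

lemma tendsto_sub_sqrt_atTop : Tendsto (fun x ↦ x - √x) atTop atTop := by
  refine (Real.tendsto_sqrt_atTop.atTop_mul_atTop₀
    (tendsto_atTop_add_const_right atTop (-1) Real.tendsto_sqrt_atTop)).congr' ?_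
  filter_upwards [eventually_ge_atTop 0] with x hx
  linear_combination Real.mul_self_sqrt hx

-- Taking suprema over `[x, ∞)` turns the recursion into `sup f ≤ r * sup f + g x`.
lemma one_sub_mul_le_of_le_mul_comp_add {ι : Type*} [Preorder ι] {f g : ι → ℝ} {s : ι → ι} {a : ι}
    {r : ℝ} (hr0 : 0 ≤ r) (hr1 : r ≤ 1) (hs : ∀ x, a ≤ x → x ≤ s x) (hg : AntitoneOn g (Ici a))
    (hbdd : BddAbove (f '' Ici a)) (h : ∀ x, a ≤ x → f x ≤ r * f (s x) + g x) {x : ι}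
    (hx : a ≤ x) : (1 - r) * f x ≤ g x := by
  have hbddx : BddAbove (f '' Ici x) := hbdd.mono (image_mono (Ici_subset_Ici.2 hx))
  have le_sup {y : ι} (hy : x ≤ y) : f y ≤ sSup (f '' Ici x) := le_csSup hbddx ⟨y, hy, rfl⟩
  have sup_le : sSup (f '' Ici x) ≤ r * sSup (f '' Ici x) + g x := by
    refine csSup_le (nonempty_Ici.image f) ?_
    rintro _ ⟨y, hxy, rfl⟩
    have hay : a ≤ y := hx.trans hxy
    calc f y ≤ r * f (s y) + g y := h y hay
      _ ≤ r * sSup (f '' Ici x) + g x := add_le_add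
          (mul_le_mul_of_nonneg_left (le_sup (le_trans hxy (hs y hay))) hr0) (hg hx hay hxy)
  linarith [mul_le_mul_of_nonneg_left (le_sup le_rfl) (sub_nonneg.2 hr1)]

lemma eventually_lt_of_mul_comp_add_le {ι : Type*} {l : Filter ι} {f e : ι → ℝ} {s : ι → ι}
    {r p a : ℝ} (hr0 : 0 ≤ r) (hr1 : r < 1) (hs : Tendsto s l l) (hf : ∀ᶠ x in l, 0 ≤ f x)
    (he : Tendsto e l (𝓝 p)) (h : ∀ᶠ x in l, r * f (s x) + e x ≤ f x) (ha : a < p / (1 - r)) :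
    ∀ᶠ x in l, a < f x := by
  have h1r : 0 < 1 - r := sub_pos.2 hr1
  obtain ⟨q, haq, hqp⟩ := exists_between ((lt_div_iff₀ h1r).1 ha)
  have iterate_le (j : ℕ) : ∀ᶠ x in l, q * (1 - r ^ j) / (1 - r) ≤ f x := by
    induction j with
    | zero => simpa using hf
    | succ j ih =>
      filter_upwards [hs.eventually ih, h, he.eventually_const_lt hqp] with x hsx hx hex
      calc q * (1 - r ^ (j + 1)) / (1 - r) = r * (q * (1 - r ^ j) / (1 - r)) + q := by
            field_simp; ring
        _ ≤ r * f (s x) + e x := add_le_add (mul_le_mul_of_nonneg_left hsx hr0) hex.le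
        _ ≤ f x := hx
  have iterate_tendsto : Tendsto (fun j : ℕ ↦ q * (1 - r ^ j) / (1 - r)) atTop
      (𝓝 (q * (1 - 0) / (1 - r))) :=
    (((tendsto_pow_atTop_nhds_zero_of_lt_one hr0 hr1).const_sub 1).const_mul q).div_const _
  have ha_lt : a < q * (1 - 0) / (1 - r) := by rwa [sub_zero, mul_one, lt_div_iff₀ h1r]
  obtain ⟨j, hj⟩ := (iterate_tendsto.eventually_const_lt ha_lt).exists
  exact (iterate_le j).mono fun x hx ↦ hj.trans_le hx

lemma eventually_div_log_lt {F F' : ℝ → ℝ} {κ a : ℝ}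
    (hF : ∀ᶠ x in atTop, HasDerivAt F (F' x) x)
    (hlim : Tendsto (fun x ↦ x * F' x) atTop (𝓝 κ)) (ha : κ < a) :
    ∀ᶠ x in atTop, F x / Real.log x < a := by
  obtain ⟨b, hκb, hba⟩ := exists_between ha
  obtain ⟨X, hX⟩ := eventually_atTop.1
    (hF.and ((hlim.eventually_lt_const hκb).and (eventually_gt_atTop (0 : ℝ))))
  have hderiv {x : ℝ} (hx : X ≤ x) :
      HasDerivAt (fun x ↦ F x - b * Real.log x) (F' x - b * x⁻¹) x :=
    (hX x hx).1.sub ((Real.hasDerivAt_log (hX x hx).2.2.ne').const_mul b)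
  have hanti : AntitoneOn (fun x ↦ F x - b * Real.log x) (Ici X) := by
    refine antitoneOn_of_hasDerivWithinAt_nonpos (convex_Ici X)
      (fun x hx ↦ (hderiv hx).continuousAt.continuousWithinAt)
      (fun x hx ↦ (hderiv (interior_subset hx)).hasDerivWithinAt) fun x hx ↦ ?_
    obtain ⟨-, hlt, hx0⟩ := hX x (interior_subset hx)
    rw [sub_nonpos, ← div_eq_mul_inv, le_div_iff₀ hx0, mul_comm]
    exact hlt.le
  have hsmall : Tendsto (fun x ↦ (F X - b * Real.log X) / Real.log x) atTop (𝓝 0) :=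
    tendsto_const_nhds.div_atTop Real.tendsto_log_atTop
  filter_upwards [eventually_ge_atTop X, hsmall.eventually_lt_const (sub_pos.2 hba),
    eventually_gt_atTop 1] with x hx hxsmall hx1
  have hlog : 0 < Real.log x := Real.log_pos hx1
  have hFx : F x - b * Real.log x ≤ F X - b * Real.log X := hanti self_mem_Ici hx hx
  rw [div_lt_iff₀ hlog] at hxsmall ⊢
  linarith

lemma tendsto_div_log_of_tendsto_mul_deriv {F F' : ℝ → ℝ} {κ : ℝ}
    (hF : ∀ᶠ x in atTop, HasDerivAt F (F' x) x)
    (hlim : Tendsto (fun x ↦ x * F' x) atTop (𝓝 κ)) :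
    Tendsto (fun x ↦ F x / Real.log x) atTop (𝓝 κ) := by
  refine tendsto_order.2 ⟨fun a ha ↦ ?_, fun a ha ↦ eventually_div_log_lt hF hlim ha⟩
  have hneg : Tendsto (fun x ↦ x * -F' x) atTop (𝓝 (-κ)) := by simpa only [mul_neg] using hlim.neg
  filter_upwards [eventually_div_log_lt (F := fun x ↦ -F x) (hF.mono fun x hx ↦ hx.neg) hneg
    (neg_lt_neg ha)] with x hx
  rwa [neg_div, neg_lt_neg_iff] at hx

lemma tendsto_rpow_neg_div_rpow {A : ℝ → ℝ} (hA : ∀ᶠ x in atTop, 0 < A x)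
    (hlog : Tendsto (fun x ↦ Real.log (A x) / Real.log x) atTop (𝓝 0)) {γ : ℝ} (hγ : 0 < γ)
    (β : ℝ) : Tendsto (fun x ↦ x ^ (-γ) / A x ^ β) atTop (𝓝 0) := by
  have hcoef : Tendsto (fun x ↦ -γ - Real.log (A x) / Real.log x * β) atTop (𝓝 (-γ - 0 * β)) :=
    (hlog.mul_const β).const_sub (-γ)
  have hexponent : Tendsto
      (fun x ↦ Real.log x * (-γ - Real.log (A x) / Real.log x * β)) atTop atBot :=
    Real.tendsto_log_atTop.atTop_mul_neg (by simpa using hγ) hcoef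
  refine (Real.tendsto_exp_atBot.comp hexponent).congr' ?_
  filter_upwards [hA, eventually_gt_atTop 1] with x hAx hx
  have hlogx : Real.log x ≠ 0 := (Real.log_pos hx).ne'
  rw [Function.comp_apply, Real.rpow_def_of_pos (one_pos.trans hx), Real.rpow_def_of_pos hAx,
    ← Real.exp_sub]
  congr 1
  field_simp

lemma tendsto_div_rpow_log_of_rpow_neg_div_log {A : ℝ → ℝ} {α κ : ℝ} (hα : 0 < α)
    (hκ : 0 < κ) (hA : ∀ᶠ x in atTop, 0 < A x)
    (hlim : Tendsto (fun x ↦ A x ^ (-α) / Real.log x) atTop (𝓝 κ)) :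
    Tendsto (fun x ↦ A x / (κ ^ (-1 / α) * Real.log x ^ (-1 / α))) atTop (𝓝 1) := by
  have h := (hlim.div_const κ).rpow_const (p := -1 / α) (Or.inl (div_self hκ.ne' ▸ one_ne_zero))
  rw [div_self hκ.ne', Real.one_rpow] at h
  refine h.congr' ?_
  filter_upwards [hA, eventually_gt_atTop 1] with x hAx hx
  have hlogx : 0 < Real.log x := Real.log_pos hx
  have hroot : (A x ^ (-α)) ^ (-1 / α) = A x := by
    rw [← Real.rpow_mul hAx.le, show -α * (-1 / α) = 1 by field_simp, Real.rpow_one]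
  rw [Real.div_rpow (by positivity) hκ.le, Real.div_rpow (by positivity) hlogx.le, hroot,
    div_div, mul_comm]

end Asymptotics

/-- The relations between the gap `D = M - R` to the limit, its image `U = M - Ψ⁺ ∘ R`, and the
double smoothing `S` of `U`; here `r = 1 / N`, and smoothing shifts the argument by at most `√x` up
to an error `w / x`. -/
structure GapSystem (r w : ℝ) (S D U : ℝ → ℝ) : Prop where
  r_nonneg : 0 ≤ r
  r_lt_one : r < 1
  w_nonneg : 0 ≤ w
  continuous_S : Continuous S
  antitone_S : Antitone S
  nonneg_S : ∀ x, 0 ≤ S x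
  D_eq : ∀ x, 0 < x → D x = r * S x + (1 - r) * runningMean S x
  D_pos : ∀ x, 0 < x → 0 < D x
  tendsto_D : Tendsto D atTop (𝓝 0)
  U_le_D : ∀ x, U x ≤ D x
  eventually_lower : ∀ᶠ x in atTop, (1 - w / x) * U (x + √x) ≤ S x
  eventually_upper : ∀ᶠ x in atTop, S x ≤ U (x - √x) + w / x

namespace GapSystem

variable {r w : ℝ} {S D U : ℝ → ℝ}

lemma one_sub_r_pos (h : GapSystem r w S D U) : 0 < 1 - r := sub_pos.2 h.r_lt_one

lemma meanExcess_nonneg (h : GapSystem r w S D U) {x : ℝ} (hx : 0 < x) : 0 ≤ meanExcess S x :=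
  sub_nonneg.2 (le_runningMean h.antitone_S hx)

lemma D_eq_sub (h : GapSystem r w S D U) {x : ℝ} (hx : 0 < x) :
    D x = runningMean S x - r * meanExcess S x := by
  rw [h.D_eq x hx, meanExcess]
  ring

lemma D_le_runningMean (h : GapSystem r w S D U) {x : ℝ} (hx : 0 < x) : D x ≤ runningMean S x := by
  rw [h.D_eq_sub hx]
  exact sub_le_self _ (mul_nonneg h.r_nonneg (h.meanExcess_nonneg hx))

lemma runningMean_pos (h : GapSystem r w S D U) {x : ℝ} (hx : 0 < x) : 0 < runningMean S x :=
  (h.D_pos x hx).trans_le (h.D_le_runningMean hx)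

lemma eventually_runningMean_pos (h : GapSystem r w S D U) : ∀ᶠ x in atTop, 0 < runningMean S x :=
  (eventually_gt_atTop 0).mono fun _ ↦ h.runningMean_pos

lemma runningMean_le_div (h : GapSystem r w S D U) {x : ℝ} (hx : 0 < x) :
    runningMean S x ≤ D x / (1 - r) := by
  rw [le_div_iff₀ h.one_sub_r_pos, h.D_eq x hx, mul_comm]
  exact le_add_of_nonneg_left (mul_nonneg h.r_nonneg (h.nonneg_S x))

lemma antitoneOn_D (h : GapSystem r w S D U) : AntitoneOn D (Ioi 0) := by
  intro x hx y hy hxy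
  rw [h.D_eq x hx, h.D_eq y hy]
  exact add_le_add (mul_le_mul_of_nonneg_left (h.antitone_S hxy) h.r_nonneg)
    (mul_le_mul_of_nonneg_left (antitoneOn_runningMean h.antitone_S hx hy hxy)
      h.one_sub_r_pos.le)

lemma tendsto_runningMean (h : GapSystem r w S D U) :
    Tendsto (runningMean S) atTop (𝓝 0) := by
  refine tendsto_of_tendsto_of_tendsto_of_le_of_le' tendsto_const_nhds
    (zero_div (1 - r) ▸ h.tendsto_D.div_const (1 - r)) ?_ ?_
  · exact h.eventually_runningMean_pos.mono fun x hx ↦ hx.le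
  · exact (eventually_gt_atTop 0).mono fun x hx ↦ h.runningMean_le_div hx

lemma meanExcess_le_runningMean (h : GapSystem r w S D U) (x : ℝ) :
    meanExcess S x ≤ runningMean S x :=
  sub_le_self _ (h.nonneg_S x)

lemma hasDerivAt_runningMean (h : GapSystem r w S D U) {x : ℝ} (hx : 0 < x) :
    HasDerivAt (runningMean S) (-meanExcess S x / x) x :=
  _root_.hasDerivAt_runningMean h.continuous_S hx.ne'

lemma meanExcess_eq_add (h : GapSystem r w S D U) (x : ℝ) {y : ℝ} (hy : 0 < y) :
    meanExcess S x = r * meanExcess S y + (D - U) y +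
      (runningMean S x - runningMean S y) + (U y - S x) := by
  rw [Pi.sub_apply, h.D_eq_sub hy, meanExcess]
  ring

lemma eventually_meanExcess_le_add (h : GapSystem r w S D U) : ∀ᶠ x in atTop,
    meanExcess S x ≤ r * meanExcess S (x + √x) +
      ((D - U) (x + √x) + (w + 1) * (√x)⁻¹ * runningMean S x) := by
  filter_upwards [h.eventually_lower, eventually_ge_atTop 1] with x hlower hx
  have hx0 : 0 < x := one_pos.trans_le hx
  have hsqrt : 0 < √x := Real.sqrt_pos.2 hx0
  have hy : 0 < x + √x := add_pos hx0 hsqrt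
  have mean_le : runningMean S (x + √x) ≤ runningMean S x :=
    antitoneOn_runningMean h.antitone_S hx0 hy (le_add_of_nonneg_right hsqrt.le)
  have mean_sub_le : runningMean S x - runningMean S (x + √x) ≤ (√x)⁻¹ * runningMean S x := by
    calc _ ≤ (x + √x - x) / x * runningMean S (x + √x) := runningMean_sub_le h.nonneg_S hx0
          (le_add_of_nonneg_right hsqrt.le) h.antitone_S.intervalIntegrable
      _ = (√x)⁻¹ * runningMean S (x + √x) := by rw [add_sub_cancel_left, Real.sqrt_div_self']; simp
      _ ≤ _ := mul_le_mul_of_nonneg_left mean_le (by positivity)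
  have tail_le : w / x * U (x + √x) ≤ w * (√x)⁻¹ * runningMean S x := by
    calc w / x * U (x + √x) ≤ w / x * runningMean S x :=
          mul_le_mul_of_nonneg_left ((h.U_le_D _).trans ((h.D_le_runningMean hy).trans mean_le))
            (div_nonneg h.w_nonneg hx0.le)
      _ ≤ w * (√x)⁻¹ * runningMean S x := mul_le_mul_of_nonneg_right
          (mul_le_mul_of_nonneg_left (inv_anti₀ hsqrt (Real.sqrt_le_self_iff.2 (.inr hx)))
            h.w_nonneg)
          (h.runningMean_pos hx0).le
  rw [h.meanExcess_eq_add x hy]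
  linarith

lemma eventually_le_meanExcess (h : GapSystem r w S D U) : ∀ᶠ x in atTop,
    r * meanExcess S (x - √x) + ((D - U) (x - √x) - (w + 2) * (√x)⁻¹) ≤ meanExcess S x := by
  filter_upwards [h.eventually_upper, eventually_ge_atTop 4,
    h.tendsto_runningMean.eventually_le_const one_pos] with x hupper hx mean_le_one
  have hx0 : 0 < x := by linarith
  have hsqrt : 2 ≤ √x := Real.le_sqrt_of_sq_le (by linarith)
  have hsq : √x * √x = x := Real.mul_self_sqrt hx0.le
  have hy : 0 < x - √x := by nlinarith
  have mean_sub_le : runningMean S (x - √x) - runningMean S x ≤ 2 * (√x)⁻¹ := by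
    calc _ ≤ (x - (x - √x)) / (x - √x) * runningMean S x := runningMean_sub_le h.nonneg_S hy
          (sub_le_self _ (Real.sqrt_nonneg x)) h.antitone_S.intervalIntegrable
      _ ≤ (x - (x - √x)) / (x - √x) := mul_le_of_le_one_right
          (div_nonneg (by linarith) hy.le) mean_le_one
      _ ≤ 2 * (√x)⁻¹ := by
          rw [← div_eq_mul_inv, div_le_div_iff₀ hy (by linarith)]
          nlinarith
  have tail_le : w / x ≤ w * (√x)⁻¹ :=
    mul_le_mul_of_nonneg_left (inv_anti₀ (by linarith) (by nlinarith)) h.w_nonneg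
  rw [h.meanExcess_eq_add x hy]
  linarith

lemma nonneg_of_tendsto_sub_div_rpow (h : GapSystem r w S D U) {β q : ℝ}
    (hgap : Tendsto (fun x ↦ (D x - U x) / D x ^ β) atTop (𝓝 q)) : 0 ≤ q :=
  ge_of_tendsto hgap <| (eventually_gt_atTop 0).mono fun x hx ↦
    div_nonneg (sub_nonneg.2 (h.U_le_D x)) (Real.rpow_nonneg (h.D_pos x hx).le _)

lemma eventually_meanExcess_le_add_mul_rpow (h : GapSystem r w S D U) {β q a : ℝ} (hβ : 0 ≤ β)
    (hgap : Tendsto (fun x ↦ (D x - U x) / D x ^ (β + 1)) atTop (𝓝 q))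
    (hsqrt : Tendsto (fun x ↦ (√x)⁻¹ / runningMean S x ^ β) atTop (𝓝 0)) (hqa : q < a) :
    ∀ᶠ x in atTop, meanExcess S x ≤
      r * meanExcess S (x + √x) + a * runningMean S x ^ (β + 1) := by
  obtain ⟨b, hqb, hba⟩ := exists_between hqa
  have shift_tendsto : Tendsto (fun x ↦ x + √x) atTop atTop :=
    tendsto_atTop_mono (fun x ↦ le_add_of_nonneg_right (Real.sqrt_nonneg x)) tendsto_id
  have error_lt : ∀ᶠ x in atTop, (w + 1) * ((√x)⁻¹ / runningMean S x ^ β) < a - b :=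
    (hsqrt.const_mul (w + 1)).eventually_lt_const (by rwa [mul_zero, sub_pos])
  filter_upwards [h.eventually_meanExcess_le_add, error_lt,
    shift_tendsto.eventually (hgap.eventually_lt_const hqb), eventually_gt_atTop 0]
    with x hrec herr hgapx hx
  have hy : 0 < x + √x := add_pos_of_pos_of_nonneg hx (Real.sqrt_nonneg x)
  have hA := h.runningMean_pos hx
  have D_le : D (x + √x) ≤ runningMean S x := (h.D_le_runningMean hy).trans
    (antitoneOn_runningMean h.antitone_S hx hy (le_add_of_nonneg_right (Real.sqrt_nonneg x)))
  have gap_le : (D - U) (x + √x) ≤ b * runningMean S x ^ (β + 1) := by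
    rw [div_lt_iff₀ (Real.rpow_pos_of_pos (h.D_pos _ hy) _)] at hgapx
    exact hgapx.le.trans (mul_le_mul_of_nonneg_left
      (Real.rpow_le_rpow (h.D_pos _ hy).le D_le (by linarith))
      ((h.nonneg_of_tendsto_sub_div_rpow hgap).trans hqb.le))
  have error_le :
      (w + 1) * (√x)⁻¹ * runningMean S x ≤ (a - b) * runningMean S x ^ (β + 1) := by
    rw [← mul_div_assoc, div_lt_iff₀ (Real.rpow_pos_of_pos hA _)] at herr
    rw [Real.rpow_add_one hA.ne', ← mul_assoc]
    exact mul_le_mul_of_nonneg_right herr.le hA.le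
  linarith

lemma eventually_meanExcess_le_mul_rpow (h : GapSystem r w S D U) {β q a : ℝ} (hβ : 0 ≤ β)
    (hgap : Tendsto (fun x ↦ (D x - U x) / D x ^ (β + 1)) atTop (𝓝 q))
    (hsqrt : Tendsto (fun x ↦ (√x)⁻¹ / runningMean S x ^ β) atTop (𝓝 0)) (hqa : q < a) :
    ∀ᶠ x in atTop, (1 - r) * meanExcess S x ≤ a * runningMean S x ^ (β + 1) := by
  obtain ⟨X, hX⟩ := eventually_atTop.1
    ((h.eventually_meanExcess_le_add_mul_rpow hβ hgap hsqrt hqa).and (eventually_gt_atTop 0))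
  have mean_antitone : AntitoneOn (runningMean S) (Ici X) :=
    (antitoneOn_runningMean h.antitone_S).mono fun x hx ↦ (hX x hx).2
  filter_upwards [eventually_ge_atTop X] with x hx
  refine one_sub_mul_le_of_le_mul_comp_add (a := X) (s := fun x ↦ x + √x)
    (g := fun x ↦ a * runningMean S x ^ (β + 1)) h.r_nonneg h.r_lt_one.le
    (fun x _ ↦ le_add_of_nonneg_right (Real.sqrt_nonneg x)) ?_ ?_ (fun x hx ↦ (hX x hx).1) hx
  · exact fun x hx y hy hxy ↦ mul_le_mul_of_nonneg_left
      (Real.rpow_le_rpow (h.runningMean_pos (hX y hy).2).le (mean_antitone hx hy hxy)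
        (by linarith)) ((h.nonneg_of_tendsto_sub_div_rpow hgap).trans hqa.le)
  · refine ⟨runningMean S X, ?_⟩
    rintro _ ⟨y, hy, rfl⟩
    exact (h.meanExcess_le_runningMean y).trans (mean_antitone self_mem_Ici hy hy)

variable {α p : ℝ}

lemma tendsto_sub_div_rpow_one (h : GapSystem r w S D U) (hα : 0 < α)
    (hgap : Tendsto (fun x ↦ (D x - U x) / D x ^ (α + 1)) atTop (𝓝 p)) :
    Tendsto (fun x ↦ (D x - U x) / D x ^ ((0 : ℝ) + 1)) atTop (𝓝 0) := by
  have hpow : Tendsto (fun x ↦ D x ^ α) atTop (𝓝 0) := by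
    simpa only [Real.zero_rpow hα.ne'] using h.tendsto_D.rpow_const (.inr hα.le)
  refine (mul_zero p ▸ hgap.mul hpow).congr' ?_
  filter_upwards [eventually_gt_atTop 0] with x hx
  have hD := h.D_pos x hx
  rw [zero_add, Real.rpow_one, Real.rpow_add_one hD.ne']
  field_simp [(Real.rpow_pos_of_pos hD α).ne']

lemma tendsto_meanExcess_div_runningMean (h : GapSystem r w S D U) (hα : 0 < α)
    (hgap : Tendsto (fun x ↦ (D x - U x) / D x ^ (α + 1)) atTop (𝓝 p)) :
    Tendsto (fun x ↦ meanExcess S x / runningMean S x) atTop (𝓝 0) := by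
  have hsqrt : Tendsto (fun x ↦ (√x)⁻¹ / runningMean S x ^ (0 : ℝ)) atTop (𝓝 0) := by
    refine Real.tendsto_sqrt_atTop.inv_tendsto_atTop.congr fun x ↦ ?_
    rw [Real.rpow_zero, div_one, Pi.inv_apply]
  refine tendsto_order.2 ⟨fun a ha ↦ ?_, fun a ha ↦ ?_⟩
  · filter_upwards [eventually_gt_atTop 0] with x hx
    exact ha.trans_le (div_nonneg (h.meanExcess_nonneg hx) (h.runningMean_pos hx).le)
  · obtain ⟨b, hb, hba⟩ := exists_between ha
    filter_upwards [h.eventually_meanExcess_le_mul_rpow le_rfl (h.tendsto_sub_div_rpow_one hα hgap)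
      hsqrt (mul_pos h.one_sub_r_pos hb), eventually_gt_atTop 0] with x hx hx0
    rw [zero_add, Real.rpow_one, mul_assoc] at hx
    exact ((div_le_iff₀ (h.runningMean_pos hx0)).2
      (le_of_mul_le_mul_left hx h.one_sub_r_pos)).trans_lt hba

lemma tendsto_div_runningMean (h : GapSystem r w S D U) (hα : 0 < α)
    (hgap : Tendsto (fun x ↦ (D x - U x) / D x ^ (α + 1)) atTop (𝓝 p)) :
    Tendsto (fun x ↦ D x / runningMean S x) atTop (𝓝 1) := by
  have hlim := ((h.tendsto_meanExcess_div_runningMean hα hgap).const_mul r).const_sub 1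
  rw [mul_zero, sub_zero] at hlim
  refine hlim.congr' ?_
  filter_upwards [eventually_gt_atTop 0] with x hx
  rw [h.D_eq_sub hx, sub_div, div_self (h.runningMean_pos hx).ne', mul_div_assoc]

lemma tendsto_log_runningMean_div_log (h : GapSystem r w S D U) (hα : 0 < α)
    (hgap : Tendsto (fun x ↦ (D x - U x) / D x ^ (α + 1)) atTop (𝓝 p)) :
    Tendsto (fun x ↦ Real.log (runningMean S x) / Real.log x) atTop (𝓝 0) := by
  refine tendsto_div_log_of_tendsto_mul_deriv
    (F' := fun x ↦ -meanExcess S x / x / runningMean S x) ?_ ?_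
  · filter_upwards [eventually_gt_atTop 0] with x hx
    exact (h.hasDerivAt_runningMean hx).log (h.runningMean_pos hx).ne'
  · refine (neg_zero (G := ℝ) ▸
      (h.tendsto_meanExcess_div_runningMean hα hgap).neg).congr' ?_
    filter_upwards [eventually_ne_atTop 0] with x hx
    field_simp

lemma tendsto_inv_sqrt_div_rpow (h : GapSystem r w S D U) (hα : 0 < α)
    (hgap : Tendsto (fun x ↦ (D x - U x) / D x ^ (α + 1)) atTop (𝓝 p)) (β : ℝ) :
    Tendsto (fun x ↦ (√x)⁻¹ / runningMean S x ^ β) atTop (𝓝 0) := by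
  refine (tendsto_rpow_neg_div_rpow h.eventually_runningMean_pos
    (h.tendsto_log_runningMean_div_log hα hgap) one_half_pos β).congr' ?_
  filter_upwards [eventually_ge_atTop 0] with x hx
  rw [Real.rpow_neg hx, Real.sqrt_eq_rpow]

lemma eventually_le_meanExcess_div_rpow (h : GapSystem r w S D U) {β : ℝ} (hβ : 0 ≤ β) :
    ∀ᶠ x in atTop, r * (meanExcess S (x - √x) / runningMean S (x - √x) ^ β) +
        ((D (x - √x) - U (x - √x)) / D (x - √x) ^ β * (D x / runningMean S x) ^ β -
          (w + 2) * ((√x)⁻¹ / runningMean S x ^ β)) ≤ meanExcess S x / runningMean S x ^ β := by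
  filter_upwards [h.eventually_le_meanExcess, eventually_gt_atTop 0,
    tendsto_sub_sqrt_atTop.eventually_gt_atTop 0] with x hrec hx hy
  have hyx : x - √x ≤ x := sub_le_self _ (Real.sqrt_nonneg x)
  have hAx : 0 < runningMean S x ^ β := Real.rpow_pos_of_pos (h.runningMean_pos hx) _
  have excess_le : meanExcess S (x - √x) / runningMean S (x - √x) ^ β ≤
      meanExcess S (x - √x) / runningMean S x ^ β :=
    div_le_div_of_nonneg_left (h.meanExcess_nonneg hy) hAx (Real.rpow_le_rpow
      (h.runningMean_pos hx).le (antitoneOn_runningMean h.antitone_S hy hx hyx) hβ)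
  have gap_le : (D (x - √x) - U (x - √x)) / D (x - √x) ^ β *
      (D x / runningMean S x) ^ β ≤ (D - U) (x - √x) / runningMean S x ^ β := by
    rw [Real.div_rpow (h.D_pos x hx).le (h.runningMean_pos hx).le, div_mul_div_comm]
    refine (div_le_div_iff₀ (mul_pos (Real.rpow_pos_of_pos (h.D_pos _ hy) _) hAx) hAx).2 ?_
    rw [mul_assoc, Pi.sub_apply]
    exact mul_le_mul_of_nonneg_left (mul_le_mul_of_nonneg_right (Real.rpow_le_rpow
      (h.D_pos x hx).le (h.antitoneOn_D hy hx hyx) hβ) hAx.le)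
      (sub_nonneg.2 (h.U_le_D _))
  calc r * (meanExcess S (x - √x) / runningMean S (x - √x) ^ β) +
        ((D (x - √x) - U (x - √x)) / D (x - √x) ^ β * (D x / runningMean S x) ^ β -
          (w + 2) * ((√x)⁻¹ / runningMean S x ^ β))
      ≤ r * (meanExcess S (x - √x) / runningMean S x ^ β) +
        ((D - U) (x - √x) / runningMean S x ^ β -
          (w + 2) * ((√x)⁻¹ / runningMean S x ^ β)) := by
        gcongr
        exact h.r_nonneg
    _ = (r * meanExcess S (x - √x) + ((D - U) (x - √x) - (w + 2) * (√x)⁻¹)) /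
        runningMean S x ^ β := by ring
    _ ≤ meanExcess S x / runningMean S x ^ β := div_le_div_of_nonneg_right hrec hAx.le

lemma eventually_lt_meanExcess_div_rpow (h : GapSystem r w S D U) (hα : 0 < α)
    (hgap : Tendsto (fun x ↦ (D x - U x) / D x ^ (α + 1)) atTop (𝓝 p)) {a : ℝ}
    (ha : a < p / (1 - r)) :
    ∀ᶠ x in atTop, a < meanExcess S x / runningMean S x ^ (α + 1) := by
  have error_tendsto : Tendsto (fun x ↦ (D (x - √x) - U (x - √x)) / D (x - √x) ^ (α + 1) *
      (D x / runningMean S x) ^ (α + 1) - (w + 2) * ((√x)⁻¹ / runningMean S x ^ (α + 1)))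
      atTop (𝓝 p) := by
    simpa using ((hgap.comp tendsto_sub_sqrt_atTop).mul
      ((h.tendsto_div_runningMean hα hgap).rpow_const (p := α + 1) (.inl one_ne_zero))).sub
      ((h.tendsto_inv_sqrt_div_rpow hα hgap (α + 1)).const_mul (w + 2))
  refine eventually_lt_of_mul_comp_add_le h.r_nonneg h.r_lt_one tendsto_sub_sqrt_atTop ?_
    error_tendsto (h.eventually_le_meanExcess_div_rpow (by linarith)) ha
  filter_upwards [eventually_gt_atTop 0] with x hx
  exact div_nonneg (h.meanExcess_nonneg hx) (Real.rpow_nonneg (h.runningMean_pos hx).le _)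

lemma tendsto_meanExcess_div_rpow (h : GapSystem r w S D U) (hα : 0 < α)
    (hgap : Tendsto (fun x ↦ (D x - U x) / D x ^ (α + 1)) atTop (𝓝 p)) :
    Tendsto (fun x ↦ meanExcess S x / runningMean S x ^ (α + 1)) atTop (𝓝 (p / (1 - r))) := by
  refine tendsto_order.2
    ⟨fun a ha ↦ h.eventually_lt_meanExcess_div_rpow hα hgap ha, fun a ha ↦ ?_⟩
  obtain ⟨b, hpb, hba⟩ := exists_between ha
  filter_upwards [h.eventually_meanExcess_le_mul_rpow hα.le hgap
    (h.tendsto_inv_sqrt_div_rpow hα hgap α) ((div_lt_iff₀ h.one_sub_r_pos).1 hpb),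
    eventually_gt_atTop 0] with x hx hx0
  rw [mul_comm b, mul_assoc] at hx
  exact ((div_le_iff₀ (Real.rpow_pos_of_pos (h.runningMean_pos hx0) _)).2
    (le_of_mul_le_mul_left hx h.one_sub_r_pos)).trans_lt hba

lemma tendsto_runningMean_rpow_neg_div_log (h : GapSystem r w S D U) (hα : 0 < α)
    (hgap : Tendsto (fun x ↦ (D x - U x) / D x ^ (α + 1)) atTop (𝓝 p)) :
    Tendsto (fun x ↦ runningMean S x ^ (-α) / Real.log x) atTop (𝓝 (α * (p / (1 - r)))) := by
  refine tendsto_div_log_of_tendsto_mul_deriv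
    (F' := fun x ↦ -meanExcess S x / x * -α * runningMean S x ^ (-α - 1)) ?_ ?_
  · filter_upwards [eventually_gt_atTop 0] with x hx
    exact (h.hasDerivAt_runningMean hx).rpow_const (.inl (h.runningMean_pos hx).ne')
  · refine ((h.tendsto_meanExcess_div_rpow hα hgap).const_mul α).congr' ?_
    filter_upwards [eventually_gt_atTop 0] with x hx
    rw [← neg_add', Real.rpow_neg (h.runningMean_pos hx).le]
    field_simp

theorem tendsto_div_rpow_log (h : GapSystem r w S D U) (hα : 0 < α) (hp : 0 < p)
    (hgap : Tendsto (fun x ↦ (D x - U x) / D x ^ (α + 1)) atTop (𝓝 p)) :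
    Tendsto (fun x ↦ D x / ((α * (p / (1 - r))) ^ (-1 / α) * Real.log x ^ (-1 / α)))
      atTop (𝓝 1) := by
  have hmean := tendsto_div_rpow_log_of_rpow_neg_div_log hα
    (mul_pos hα (div_pos hp h.one_sub_r_pos)) h.eventually_runningMean_pos
    (h.tendsto_runningMean_rpow_neg_div_log hα hgap)
  refine (one_mul (1 : ℝ) ▸ (h.tendsto_div_runningMean hα hgap).mul hmean).congr' ?_
  filter_upwards [eventually_gt_atTop 0] with x hx
  exact div_mul_div_cancel₀ (h.runningMean_pos hx).ne'

end GapSystem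

section Smoothing

/-- The convolution `x ↦ E[f(x - ξ)]` of `f` with the law `μ` of `ξ`. -/
noncomputable def smoothing (μ : Measure ℝ) (f : ℝ → ℝ) (x : ℝ) : ℝ := ∫ u, f (x - u) ∂μ

/-- The smoothing of `f` on `(0, ∞)`, continued by the constant `c`: equation (C⁺) replaces the
smoothing of `Ψ⁺ ∘ R` by `E[V]` on the negative half-line. -/
noncomputable def halfLineSmoothing (μ : Measure ℝ) (c : ℝ) (f : ℝ → ℝ) (x : ℝ) : ℝ :=
  if 0 < x then smoothing μ f x else c

lemma halfLineSmoothing_of_pos (μ : Measure ℝ) (c : ℝ) (f : ℝ → ℝ) {x : ℝ} (hx : 0 < x) :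
    halfLineSmoothing μ c f x = smoothing μ f x :=
  if_pos hx

lemma halfLineSmoothing_of_nonpos (μ : Measure ℝ) (c : ℝ) (f : ℝ → ℝ) {x : ℝ} (hx : x ≤ 0) :
    halfLineSmoothing μ c f x = c :=
  if_neg hx.not_gt

lemma measureReal_le_abs_le_integral_sq_div {μ : Measure ℝ} (hμ : Integrable (fun u ↦ u ^ 2) μ)
    {L : ℝ} (hL : 0 < L) : μ.real {u | L ≤ |u|} ≤ (∫ u, u ^ 2 ∂μ) / L ^ 2 := by
  have h := mul_meas_ge_le_integral_of_nonneg (ae_of_all μ fun u ↦ sq_nonneg u) hμ (L ^ 2)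
  simp only [sq_le_sq, abs_of_pos hL] at h
  rwa [le_div_iff₀' (by positivity)]

variable {μ : Measure ℝ} [IsProbabilityMeasure μ] {f : ℝ → ℝ} {a b c C : ℝ}

lemma integrable_comp_const_sub (hf : Measurable f) (hfab : ∀ x, f x ∈ Icc a b) (x : ℝ) :
    Integrable (fun u ↦ f (x - u)) μ :=
  .of_mem_Icc a b (by fun_prop) (ae_of_all μ fun u ↦ hfab (x - u))

lemma smoothing_mem_Icc (hf : Measurable f) (hfab : ∀ x, f x ∈ Icc a b) (x : ℝ) :
    smoothing μ f x ∈ Icc a b := by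
  have hint := integrable_comp_const_sub (μ := μ) hf hfab x
  constructor
  · simpa [smoothing] using integral_mono (integrable_const a) hint fun u ↦ (hfab (x - u)).1
  · simpa [smoothing] using integral_mono hint (integrable_const b) fun u ↦ (hfab (x - u)).2

lemma smoothing_const_sub (hf : Measurable f) (hfab : ∀ x, f x ∈ Icc a b) (c x : ℝ) :
    smoothing μ (fun y ↦ c - f y) x = c - smoothing μ f x := by
  rw [smoothing, integral_sub (integrable_const c) (integrable_comp_const_sub hf hfab x)]
  simp [smoothing]

lemma antitone_smoothing (hf : Antitone f) (hfab : ∀ x, f x ∈ Icc a b) :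
    Antitone (smoothing μ f) := fun x y hxy ↦
  integral_mono (integrable_comp_const_sub hf.measurable hfab y)
    (integrable_comp_const_sub hf.measurable hfab x) fun u ↦ hf (sub_le_sub_right hxy u)

lemma continuous_smoothing [NullSingletonClass μ] (hf : Antitone f) (hfab : ∀ x, f x ∈ Icc a b) :
    Continuous (smoothing μ f) := by
  refine continuous_iff_continuousAt.2 fun x ↦ continuousAt_of_dominated
    (bound := fun _ ↦ max |a| |b|)
    (.of_forall fun y ↦ (integrable_comp_const_sub hf.measurable hfab y).aestronglyMeasurable)
    (.of_forall fun y ↦ ae_of_all μ fun u ↦ abs_le_max_abs_abs (hfab (y - u)).1 (hfab (y - u)).2)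
    (integrable_const _) ?_
  have countable_bad : {u | ¬ContinuousAt f (x - u)}.Countable :=
    hf.countable_not_continuousAt.preimage sub_right_injective
  filter_upwards [countable_bad.ae_notMem μ] with u hu
  exact ContinuousAt.comp (f := fun y ↦ y - u) (not_not.1 hu) (by fun_prop)

lemma one_sub_tail_mul_le_smoothing (hf : Antitone f) (hfC : ∀ x, f x ∈ Icc 0 C) (x L : ℝ) :
    (1 - μ.real {u | L ≤ |u|}) * f (x + L) ≤ smoothing μ f x := by
  have htail : MeasurableSet {u : ℝ | L ≤ |u|} := measurableSet_le (by fun_prop) (by fun_prop)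
  calc (1 - μ.real {u | L ≤ |u|}) * f (x + L)
      = ∫ _ in {u | L ≤ |u|}ᶜ, f (x + L) ∂μ := by
        rw [setIntegral_const, smul_eq_mul, probReal_compl_eq_one_sub htail]
    _ ≤ ∫ u in {u | L ≤ |u|}ᶜ, f (x - u) ∂μ := by
        refine setIntegral_mono_on integrableOn_const
          (integrable_comp_const_sub hf.measurable hfC x).integrableOn htail.compl fun u hu ↦ hf ?_
        rw [mem_compl_iff, mem_ofPred_eq, not_le] at hu
        linarith [(abs_lt.1 hu).1]
    _ ≤ smoothing μ f x := setIntegral_le_integral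
        (integrable_comp_const_sub hf.measurable hfC x) (ae_of_all μ fun u ↦ (hfC (x - u)).1)

lemma smoothing_le_add_mul_tail (hf : Antitone f) (hfC : ∀ x, f x ∈ Icc 0 C) (x L : ℝ) :
    smoothing μ f x ≤ f (x - L) + C * μ.real {u | L ≤ |u|} := by
  have htail : MeasurableSet {u : ℝ | L ≤ |u|} := measurableSet_le (by fun_prop) (by fun_prop)
  have hint := integrable_comp_const_sub (μ := μ) hf.measurable hfC x
  have tail_le : ∫ u in {u | L ≤ |u|}, f (x - u) ∂μ ≤ C * μ.real {u | L ≤ |u|} := by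
    simpa [mul_comm] using setIntegral_mono_on hint.integrableOn integrableOn_const htail
      fun u _ ↦ (hfC (x - u)).2
  have center_le : ∫ u in {u | L ≤ |u|}ᶜ, f (x - u) ∂μ ≤ f (x - L) := by
    calc ∫ u in {u | L ≤ |u|}ᶜ, f (x - u) ∂μ
        ≤ ∫ _ in {u | L ≤ |u|}ᶜ, f (x - L) ∂μ := by
          refine setIntegral_mono_on hint.integrableOn integrableOn_const htail.compl
            fun u hu ↦ hf ?_
          rw [mem_compl_iff, mem_ofPred_eq, not_le] at hu
          linarith [(abs_lt.1 hu).2]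
      _ = μ.real {u | L ≤ |u|}ᶜ * f (x - L) := by rw [setIntegral_const, smul_eq_mul]
      _ ≤ f (x - L) := mul_le_of_le_one_left (hfC _).1 measureReal_le_one
  rw [smoothing, ← integral_add_compl htail hint]
  linarith

lemma measurable_halfLineSmoothing (hf : Measurable f) :
    Measurable (halfLineSmoothing μ c f) :=
  .ite measurableSet_Ioi (hf.comp measurable_sub).stronglyMeasurable.integral_prod_right'.measurable
    measurable_const

lemma halfLineSmoothing_mem_Icc (hf : Measurable f) (hfab : ∀ x, f x ∈ Icc a b)
    (hc : c ∈ Icc a b) (x : ℝ) : halfLineSmoothing μ c f x ∈ Icc a b := by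
  rw [halfLineSmoothing]
  split_ifs
  exacts [smoothing_mem_Icc hf hfab x, hc]

lemma halfLineSmoothing_const_sub (hf : Measurable f) (hfab : ∀ x, f x ∈ Icc a b) (c d x : ℝ) :
    halfLineSmoothing μ (d - c) (fun y ↦ d - f y) x = d - halfLineSmoothing μ c f x := by
  simp only [halfLineSmoothing, smoothing_const_sub hf hfab]
  split_ifs <;> rfl

lemma smoothing_halfLineSmoothing_const_sub (hf : Measurable f) (hfab : ∀ x, f x ∈ Icc a b)
    (hc : c ∈ Icc a b) (d x : ℝ) :
    smoothing μ (halfLineSmoothing μ (d - c) fun y ↦ d - f y) x =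
      d - smoothing μ (halfLineSmoothing μ c f) x := by
  rw [funext (halfLineSmoothing_const_sub hf hfab c d), smoothing_const_sub
    (measurable_halfLineSmoothing hf) (halfLineSmoothing_mem_Icc hf hfab hc)]

lemma antitone_halfLineSmoothing (hf : Antitone f) (hfb : ∀ x, f x ∈ Icc a b) :
    Antitone (halfLineSmoothing μ b f) := by
  intro x y hxy
  rcases le_or_gt x 0 with hx | hx
  · rw [halfLineSmoothing_of_nonpos μ b f hx]
    exact (halfLineSmoothing_mem_Icc (μ := μ) hf.measurable hfb
      (right_mem_Icc.2 ((hfb 0).1.trans (hfb 0).2)) y).2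
  · rw [halfLineSmoothing_of_pos μ b f hx, halfLineSmoothing_of_pos μ b f (hx.trans_le hxy)]
    exact antitone_smoothing (μ := μ) hf hfb hxy

lemma one_sub_two_mul_tail_mul_le_smoothing_halfLineSmoothing (hf : Antitone f)
    (hfC : ∀ x, f x ∈ Icc 0 C) (x L : ℝ) :
    (1 - 2 * μ.real {u | L ≤ |u|}) * f (x + 2 * L) ≤
      smoothing μ (halfLineSmoothing μ C f) x := by
  set t := μ.real {u | L ≤ |u|}
  have ht0 : 0 ≤ t := measureReal_nonneg
  have ht1 : t ≤ 1 := measureReal_le_one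
  have hC : 0 ≤ C := (hfC 0).1.trans (hfC 0).2
  have inner : (1 - t) * f (x + 2 * L) ≤ halfLineSmoothing μ C f (x + L) := by
    rcases le_or_gt (x + L) 0 with hx | hx
    · rw [halfLineSmoothing_of_nonpos μ C f hx]
      exact (mul_le_of_le_one_left (hfC _).1 (sub_le_self 1 ht0)).trans (hfC _).2
    · rw [halfLineSmoothing_of_pos μ C f hx, two_mul, ← add_assoc]
      exact one_sub_tail_mul_le_smoothing hf hfC (x + L) L
  calc (1 - 2 * t) * f (x + 2 * L) ≤ (1 - t) * ((1 - t) * f (x + 2 * L)) := by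
        nlinarith [mul_nonneg (sq_nonneg t) (hfC (x + 2 * L)).1]
    _ ≤ (1 - t) * halfLineSmoothing μ C f (x + L) :=
        mul_le_mul_of_nonneg_left inner (sub_nonneg.2 ht1)
    _ ≤ smoothing μ (halfLineSmoothing μ C f) x :=
        one_sub_tail_mul_le_smoothing (antitone_halfLineSmoothing hf hfC)
        (halfLineSmoothing_mem_Icc hf.measurable hfC (right_mem_Icc.2 hC)) x L

lemma smoothing_halfLineSmoothing_le_add_mul_tail (hf : Antitone f) (hfC : ∀ x, f x ∈ Icc 0 C)
    {x L : ℝ} (hLx : L < x) :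
    smoothing μ (halfLineSmoothing μ C f) x ≤
      f (x - 2 * L) + 2 * C * μ.real {u | L ≤ |u|} := by
  have hC : 0 ≤ C := (hfC 0).1.trans (hfC 0).2
  have outer := smoothing_le_add_mul_tail (μ := μ) (antitone_halfLineSmoothing (μ := μ) hf hfC)
    (halfLineSmoothing_mem_Icc hf.measurable hfC (right_mem_Icc.2 hC)) x L
  rw [halfLineSmoothing_of_pos μ C f (sub_pos.2 hLx)] at outer
  have inner := smoothing_le_add_mul_tail (μ := μ) hf hfC (x - L) L
  rw [sub_sub, ← two_mul] at inner
  linarith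

lemma gapSystem_of_smoothing [NullSingletonClass μ] (hμ : Integrable (fun u ↦ u ^ 2) μ) {r : ℝ}
    (hr0 : 0 ≤ r) (hr1 : r < 1) (hf : Antitone f) (hfC : ∀ x, f x ∈ Icc 0 C) {D : ℝ → ℝ}
    (hD_eq : ∀ x, 0 < x → D x = r * smoothing μ (halfLineSmoothing μ C f) x +
      (1 - r) * runningMean (smoothing μ (halfLineSmoothing μ C f)) x)
    (hD_pos : ∀ x, 0 < x → 0 < D x) (hD_lim : Tendsto D atTop (𝓝 0)) (hfD : ∀ x, f x ≤ D x) :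
    GapSystem r (8 * (∫ u, u ^ 2 ∂μ) * (1 + C)) (smoothing μ (halfLineSmoothing μ C f)) D f := by
  have hC : 0 ≤ C := (hfC 0).1.trans (hfC 0).2
  have hg := antitone_halfLineSmoothing (μ := μ) hf hfC
  have hgC := halfLineSmoothing_mem_Icc (μ := μ) hf.measurable hfC (right_mem_Icc.2 hC)
  have tail_le {x : ℝ} (hx : 0 < x) : 2 * (1 + C) * μ.real {u | √x / 2 ≤ |u|} ≤
      8 * (∫ u, u ^ 2 ∂μ) * (1 + C) / x := by
    calc 2 * (1 + C) * μ.real {u | √x / 2 ≤ |u|}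
        ≤ 2 * (1 + C) * ((∫ u, u ^ 2 ∂μ) / (√x / 2) ^ 2) := mul_le_mul_of_nonneg_left
          (measureReal_le_abs_le_integral_sq_div hμ (half_pos (Real.sqrt_pos.2 hx)))
          (by positivity)
      _ = 8 * (∫ u, u ^ 2 ∂μ) * (1 + C) / x := by
          rw [div_pow, Real.sq_sqrt hx.le]
          ring
  refine ⟨hr0, hr1, by positivity, continuous_smoothing hg hgC, antitone_smoothing hg hgC,
    fun x ↦ (smoothing_mem_Icc hg.measurable hgC x).1, hD_eq, hD_pos, hD_lim, hfD, ?_, ?_⟩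
  · filter_upwards [eventually_gt_atTop 0] with x hx
    have h := one_sub_two_mul_tail_mul_le_smoothing_halfLineSmoothing (μ := μ) hf hfC x (√x / 2)
    rw [mul_div_cancel₀ _ two_ne_zero] at h
    refine (mul_le_mul_of_nonneg_right ?_ (hfC _).1).trans h
    linarith [tail_le hx, mul_nonneg hC (measureReal_nonneg (μ := μ) (s := {u | √x / 2 ≤ |u|}))]
  · filter_upwards [eventually_ge_atTop 1] with x hx
    have hx0 : 0 < x := one_pos.trans_le hx
    have h := smoothing_halfLineSmoothing_le_add_mul_tail (μ := μ) hf hfC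
      (x := x) (L := √x / 2) (by linarith [Real.sqrt_le_self_iff.2 (.inr hx)])
    rw [mul_div_cancel₀ _ two_ne_zero] at h
    refine h.trans (add_le_add_right ?_ _)
    linarith [tail_le hx0, measureReal_nonneg (μ := μ) (s := {u | √x / 2 ≤ |u|})]

end Smoothing

section GaussianKernel

open ProbabilityTheory

/-- The law with density `gq σ`. -/
noncomputable def centeredGaussian (σ : ℝ) : Measure ℝ := gaussianReal 0 (σ ^ 2).toNNReal

instance isProbabilityMeasure_centeredGaussian (σ : ℝ) :
    IsProbabilityMeasure (centeredGaussian σ) :=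
  inferInstanceAs (IsProbabilityMeasure (gaussianReal _ _))

lemma integrable_sq_centeredGaussian (σ : ℝ) : Integrable (fun u ↦ u ^ 2) (centeredGaussian σ) :=
  (memLp_id_gaussianReal 2).integrable_sq

variable {σ : ℝ}

lemma toNNReal_sq_ne_zero (hσ : 0 < σ) : (σ ^ 2).toNNReal ≠ 0 :=
  (Real.toNNReal_pos.2 (by positivity)).ne'

lemma nullSingletonClass_centeredGaussian (hσ : 0 < σ) :
    NullSingletonClass (centeredGaussian σ) :=
  nullSingletonClass_gaussianReal (toNNReal_sq_ne_zero hσ)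

lemma gq_eq_gaussianPDFReal (hσ : 0 < σ) : gq σ = gaussianPDFReal 0 (σ ^ 2).toNNReal := by
  ext z
  rw [gq, gaussianPDFReal, Real.coe_toNNReal _ (sq_nonneg σ), sub_zero, mul_comm (2 * Real.pi),
    Real.sqrt_mul (sq_nonneg σ), Real.sqrt_sq hσ.le, inv_mul_eq_div]

lemma integrable_gq (hσ : 0 < σ) : Integrable (gq σ) := by
  rw [gq_eq_gaussianPDFReal hσ]
  exact integrable_gaussianPDFReal _ _

lemma gq_sub_comm (σ x z : ℝ) : gq σ (x - z) = gq σ (z - x) := by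
  rw [gq, gq, ← neg_sq, neg_sub]

lemma integral_gq_sub_mul (hσ : 0 < σ) (f : ℝ → ℝ) (x : ℝ) :
    ∫ z, gq σ (x - z) * f z = smoothing (centeredGaussian σ) f x := by
  rw [smoothing, centeredGaussian, integral_gaussianReal_eq_integral_smul (toNNReal_sq_ne_zero hσ),
    ← gq_eq_gaussianPDFReal hσ, ← integral_sub_left_eq_self _ volume x]
  simp only [sub_sub_cancel, smul_eq_mul]

lemma integrable_gq_sub_mul (hσ : 0 < σ) {f : ℝ → ℝ} (hf : Measurable f) {a b : ℝ}
    (hfab : ∀ x, f x ∈ Icc a b) (x : ℝ) : Integrable fun z ↦ gq σ (x - z) * f z :=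
  ((integrable_gq hσ).comp_sub_left x).mul_bdd (c := max |a| |b|) hf.aestronglyMeasurable
    (ae_of_all _ fun z ↦ abs_le_max_abs_abs (hfab z).1 (hfab z).2)

lemma gqbar_of_ne_zero (σ : ℝ) {x : ℝ} (hx : x ≠ 0) (z : ℝ) :
    gqbar σ x z = runningMean (fun y ↦ gq σ (y - z)) x := by
  rw [gqbar, if_neg hx, runningMean_eq_div, one_div_mul_eq_div]

lemma integrable_gq_sub_mul_prod (hσ : 0 < σ) {f : ℝ → ℝ} (hf : Measurable f) {a b : ℝ}
    (hfab : ∀ x, f x ∈ Icc a b) (x : ℝ) :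
    Integrable (Function.uncurry fun y z ↦ gq σ (y - z) * f z)
      ((volume.restrict (uIoc 0 x)).prod volume) := by
  have kernel_integrable : Integrable (fun p : ℝ × ℝ ↦ gq σ (p.1 - p.2))
      ((volume.restrict (uIoc 0 x)).prod volume) := by
    have h : IntegrableOn (fun _ ↦ (1 : ℝ)) (uIoc 0 x) := intervalIntegrable_const.def'
    simpa [gq_sub_comm σ, Function.comp_def] using
      ((h.convolution_integrand (ContinuousLinearMap.mul ℝ ℝ) (integrable_gq hσ)).swap)
  exact kernel_integrable.mul_bdd (c := max |a| |b|)
    (hf.comp measurable_snd).aestronglyMeasurable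
    (ae_of_all _ fun p ↦ abs_le_max_abs_abs (hfab p.2).1 (hfab p.2).2)

lemma integrable_gqbar_mul (hσ : 0 < σ) {f : ℝ → ℝ} (hf : Measurable f) {a b : ℝ}
    (hfab : ∀ x, f x ∈ Icc a b) {x : ℝ} (hx : x ≠ 0) :
    Integrable fun z ↦ gqbar σ x z * f z := by
  refine ((integrable_gq_sub_mul_prod hσ hf hfab x).integral_prod_right.const_mul
    ((if 0 ≤ x then 1 else -1) / x)).congr (ae_of_all _ fun z ↦ ?_)
  simp only [gqbar_of_ne_zero σ hx, runningMean_eq_div, div_mul_eq_mul_div,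
    Function.uncurry_apply_pair, intervalIntegral.intervalIntegral_eq_integral_uIoc, smul_eq_mul]
  rw [integral_mul_const, mul_assoc]

lemma integral_gqbar_mul (hσ : 0 < σ) {f : ℝ → ℝ} (hf : Measurable f) {a b : ℝ}
    (hfab : ∀ x, f x ∈ Icc a b) {x : ℝ} (hx : x ≠ 0) :
    ∫ z, gqbar σ x z * f z = runningMean (smoothing (centeredGaussian σ) f) x := by
  simp only [gqbar_of_ne_zero σ hx, runningMean_eq_div, div_mul_eq_mul_div, integral_div,
    ← intervalIntegral.integral_mul_const, ← integral_gq_sub_mul hσ]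
  rw [intervalIntegral_integral_swap (integrable_gq_sub_mul_prod hσ hf hfab x)]

/-- The kernel of equation (C⁺). -/
noncomputable def kernelCp (σ : ℝ) (N : ℕ) (x z : ℝ) : ℝ :=
  1 / (N : ℝ) * gq σ (x - z) + ((N : ℝ) - 1) / N * gqbar σ x z

lemma kernelCp_mul (σ : ℝ) (N : ℕ) (f : ℝ → ℝ) (x z : ℝ) : kernelCp σ N x z * f z =
    1 / (N : ℝ) * (gq σ (x - z) * f z) + ((N : ℝ) - 1) / N * (gqbar σ x z * f z) := by
  rw [kernelCp]
  ring

lemma integrable_kernelCp_mul (hσ : 0 < σ) (N : ℕ) {f : ℝ → ℝ} (hf : Measurable f) {a b : ℝ}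
    (hfab : ∀ x, f x ∈ Icc a b) {x : ℝ} (hx : x ≠ 0) :
    Integrable fun z ↦ kernelCp σ N x z * f z := by
  simp only [kernelCp_mul]
  exact ((integrable_gq_sub_mul hσ hf hfab x).const_mul _).add
    ((integrable_gqbar_mul hσ hf hfab hx).const_mul _)

lemma integral_kernelCp_mul (hσ : 0 < σ) (N : ℕ) {f : ℝ → ℝ} (hf : Measurable f) {a b : ℝ}
    (hfab : ∀ x, f x ∈ Icc a b) {x : ℝ} (hx : x ≠ 0) : ∫ z, kernelCp σ N x z * f z =
      1 / (N : ℝ) * smoothing (centeredGaussian σ) f x +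
        ((N : ℝ) - 1) / N * runningMean (smoothing (centeredGaussian σ) f) x := by
  simp only [kernelCp_mul]
  rw [integral_add ((integrable_gq_sub_mul hσ hf hfab x).const_mul _)
    ((integrable_gqbar_mul hσ hf hfab hx).const_mul _), integral_const_mul, integral_const_mul,
    integral_gq_sub_mul hσ, integral_gqbar_mul hσ hf hfab hx]

lemma SolvesCp.eq_integral_kernelCp {Ω : Type*} [MeasurableSpace Ω] {P : Measure Ω} {V : Ω → ℝ}
    {N : ℕ} {R : ℝ → ℝ} (hR : SolvesCp P V σ N R) (hσ : 0 < σ)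
    (hψ : Measurable fun y ↦ Psip P V (R y)) {a b : ℝ}
    (hψab : ∀ y, Psip P V (R y) ∈ Icc a b) (hV : ∫ ω, V ω ∂P ∈ Icc a b) {x : ℝ} (hx : x ≠ 0) :
    R x = ∫ z, kernelCp σ N x z *
      halfLineSmoothing (centeredGaussian σ) (∫ ω, V ω ∂P) (fun y ↦ Psip P V (R y)) z := by
  have right_half (z : ℝ) (hz : z ∈ Ioi 0) :
      kernelCp σ N x z * ∫ y, Psip P V (R y) * gq σ (z - y) = kernelCp σ N x z *
        halfLineSmoothing (centeredGaussian σ) (∫ ω, V ω ∂P) (fun y ↦ Psip P V (R y)) z := by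
    rw [halfLineSmoothing_of_pos _ _ _ hz, ← integral_gq_sub_mul hσ]
    simp only [mul_comm]
  have left_half (z : ℝ) (hz : z ∈ Iic 0) :
      kernelCp σ N x z *
        halfLineSmoothing (centeredGaussian σ) (∫ ω, V ω ∂P) (fun y ↦ Psip P V (R y)) z =
      (∫ ω, V ω ∂P) * kernelCp σ N x z := by
    rw [halfLineSmoothing_of_nonpos _ _ _ hz, mul_comm]
  have hint := integrable_kernelCp_mul hσ N
    (measurable_halfLineSmoothing (μ := centeredGaussian σ) hψ)
    (halfLineSmoothing_mem_Icc hψ hψab hV) hx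
  rw [← integral_add_compl measurableSet_Ioi hint, compl_Ioi,
    ← setIntegral_congr_fun measurableSet_Ioi right_half,
    setIntegral_congr_fun measurableSet_Iic left_half, integral_const_mul,
    integral_Iic_eq_integral_Iio]
  exact hR x

end GaussianKernel

section ConditionalMean

variable {Ω : Type*} [MeasurableSpace Ω] {P : Measure Ω} {V : Ω → ℝ} {y M : ℝ}

lemma nullMeasurableSet_gt (hV : Integrable V P) (y : ℝ) :
    NullMeasurableSet {ω | V ω > y} P :=
  nullMeasurableSet_lt aemeasurable_const hV.aemeasurable

variable [IsProbabilityMeasure P]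

lemma Phip_eq_Psip_mul_Pip (hy : 0 < P {ω | V ω > y}) :
    Phip P V y = Psip P V y * Pip P V y :=
  (div_mul_cancel₀ _ (ENNReal.toReal_pos hy.ne' (measure_ne_top P _)).ne').symm

lemma le_Psip (hV : Integrable V P) (hy : 0 < P {ω | V ω > y}) : y ≤ Psip P V y := by
  rw [Psip, Pip, le_div_iff₀ (ENNReal.toReal_pos hy.ne' (measure_ne_top P _)), mul_comm, Phip,
    ← measureReal_def, ← smul_eq_mul, ← setIntegral_const]
  exact setIntegral_mono_on₀ integrableOn_const hV.integrableOn (nullMeasurableSet_gt hV y)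
    fun ω hω ↦ hω.le

lemma Psip_le (hV : Integrable V P) (hVM : ∀ᵐ ω ∂P, V ω ≤ M) (hy : 0 < P {ω | V ω > y}) :
    Psip P V y ≤ M := by
  rw [Psip, Pip, div_le_iff₀ (ENNReal.toReal_pos hy.ne' (measure_ne_top P _)), mul_comm, Phip,
    ← measureReal_def, ← smul_eq_mul, ← setIntegral_const]
  exact setIntegral_mono_ae hV.integrableOn integrableOn_const hVM

lemma setIntegral_le_Psip_mul (hV : Integrable V P) (hy : 0 < P {ω | V ω > y}) {B : Set Ω}
    (hB : NullMeasurableSet B P) (hyB : {ω | V ω > y} ⊆ B) :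
    ∫ ω in B, V ω ∂P ≤ Psip P V y * P.real B := by
  have hdiff : ∫ ω in B \ {ω | V ω > y}, V ω ∂P ≤ Psip P V y * P.real (B \ {ω | V ω > y}) := by
    rw [mul_comm, ← smul_eq_mul, ← setIntegral_const]
    exact setIntegral_mono_on₀ hV.integrableOn integrableOn_const
      (hB.diff (nullMeasurableSet_gt hV y)) fun ω hω ↦ (not_lt.1 hω.2).trans (le_Psip hV hy)
  calc ∫ ω in B, V ω ∂P
      = Phip P V y + ∫ ω in B \ {ω | V ω > y}, V ω ∂P := by
        rw [Phip, setIntegral_sdiff₀ (nullMeasurableSet_gt hV y) hV.integrableOn hyB,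
          add_sub_cancel]
    _ ≤ Psip P V y * Pip P V y + Psip P V y * P.real (B \ {ω | V ω > y}) := by
        rw [Phip_eq_Psip_mul_Pip hy]
        gcongr
    _ = Psip P V y * P.real B := by
        rw [← mul_add, Pip, ← measureReal_def, ← measureReal_inter_add_sdiff₀ (s := B)
          (nullMeasurableSet_gt hV y), inter_eq_right.2 hyB]

lemma integral_le_Psip (hV : Integrable V P) (hy : 0 < P {ω | V ω > y}) :
    ∫ ω, V ω ∂P ≤ Psip P V y := by
  simpa using setIntegral_le_Psip_mul hV hy nullMeasurableSet_univ (subset_univ _)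

lemma Psip_mono (hV : Integrable V P) {x : ℝ} (hxy : x ≤ y) (hy : 0 < P {ω | V ω > y}) :
    Psip P V x ≤ Psip P V y := by
  have hyx : {ω | V ω > y} ⊆ {ω | V ω > x} := fun ω hω ↦ hxy.trans_lt hω
  have hx : 0 < P {ω | V ω > x} := hy.trans_le (measure_mono hyx)
  rw [Psip, Pip, div_le_iff₀ (ENNReal.toReal_pos hx.ne' (measure_ne_top P _))]
  exact setIntegral_le_Psip_mul hV hy (nullMeasurableSet_gt hV x) hyx

end ConditionalMean

section EquationCp

variable {Ω : Type*} [MeasurableSpace Ω] {P : Measure Ω} {V : Ω → ℝ}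
  {M σ : ℝ} {N : ℕ} {R : ℝ → ℝ}

lemma SolvesCp.sub_eq_smoothing (hR : SolvesCp P V σ N R) (hσ : 0 < σ) (hN : N ≠ 0)
    (hψ : Monotone fun y ↦ Psip P V (R y))
    (hψM : ∀ y, Psip P V (R y) ∈ Icc (∫ ω, V ω ∂P) M) {x : ℝ} (hx : x ≠ 0) :
    letI S := smoothing (centeredGaussian σ) (halfLineSmoothing (centeredGaussian σ)
      (M - ∫ ω, V ω ∂P) fun y ↦ M - Psip P V (R y))
    M - R x = 1 / (N : ℝ) * S x + (1 - 1 / (N : ℝ)) * runningMean S x := by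
  have := nullSingletonClass_centeredGaussian hσ
  set E := ∫ ω, V ω ∂P
  set S := smoothing (centeredGaussian σ) (halfLineSmoothing (centeredGaussian σ)
    (M - E) fun y ↦ M - Psip P V (R y))
  have hE := left_mem_Icc.2 ((hψM 0).1.trans (hψM 0).2)
  have hUm : Antitone fun y ↦ M - Psip P V (R y) := fun x y hxy ↦ sub_le_sub_left (hψ hxy) M
  have hU (y : ℝ) : M - Psip P V (R y) ∈ Icc 0 (M - E) :=
    ⟨sub_nonneg.2 (hψM y).2, sub_le_sub_left (hψM y).1 M⟩
  have hS : Continuous S := continuous_smoothing (antitone_halfLineSmoothing hUm hU)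
    (halfLineSmoothing_mem_Icc hUm.measurable hU (right_mem_Icc.2 ((hU 0).1.trans (hU 0).2)))
  have hG := measurable_halfLineSmoothing (μ := centeredGaussian σ) (c := E) hψ.measurable
  have hGM := halfLineSmoothing_mem_Icc (μ := centeredGaussian σ) hψ.measurable hψM hE
  have smoothing_eq (y : ℝ) : smoothing (centeredGaussian σ) (halfLineSmoothing
      (centeredGaussian σ) E fun y ↦ Psip P V (R y)) y = M - S y := by
    rw [eq_sub_iff_add_eq, ← eq_sub_iff_add_eq']
    exact smoothing_halfLineSmoothing_const_sub hψ.measurable hψM hE M y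
  have hN' : (N : ℝ) ≠ 0 := Nat.cast_ne_zero.2 hN
  rw [hR.eq_integral_kernelCp hσ hψ.measurable hψM hE hx, integral_kernelCp_mul hσ N hG hGM hx,
    funext smoothing_eq, runningMean_const_sub M hx (hS.intervalIntegrable _ _)]
  field_simp
  ring

variable [IsProbabilityMeasure P]

lemma SolvesCp.gapSystem (hV : Integrable V P) (hVM : ∀ᵐ ω ∂P, V ω ≤ M)
    (hVpos : ∀ y < M, 0 < P {ω | V ω > y}) (hσ : 0 < σ) (hN : 2 ≤ N) (hRm : Monotone R)
    (hRM : ∀ x, R x < M) (hRtop : Tendsto R atTop (𝓝 M)) (hR : SolvesCp P V σ N R) :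
    ∃ w S, GapSystem (1 / (N : ℝ)) w S (fun x ↦ M - R x) fun x ↦ M - Psip P V (R x) := by
  have hRpos (x : ℝ) := hVpos (R x) (hRM x)
  have hψm : Monotone fun y ↦ Psip P V (R y) := fun x y hxy ↦ Psip_mono hV (hRm hxy) (hRpos y)
  have hψM (y : ℝ) : Psip P V (R y) ∈ Icc (∫ ω, V ω ∂P) M :=
    ⟨integral_le_Psip hV (hRpos y), Psip_le hV hVM (hRpos y)⟩
  have := nullSingletonClass_centeredGaussian hσ
  refine ⟨_, _, gapSystem_of_smoothing (integrable_sq_centeredGaussian σ) (by positivity) ?_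
    (fun x y hxy ↦ sub_le_sub_left (hψm hxy) M) (C := M - ∫ ω, V ω ∂P)
    (fun x ↦ ⟨sub_nonneg.2 (hψM x).2, sub_le_sub_left (hψM x).1 M⟩)
    (fun x hx ↦ hR.sub_eq_smoothing hσ (by lia) hψm hψM hx.ne')
    (fun x _ ↦ sub_pos.2 (hRM x)) ?_ fun x ↦ sub_le_sub_left (le_Psip hV (hRpos x)) M⟩
  · rw [one_div]
    exact inv_lt_one_of_one_lt₀ (by exact_mod_cast hN)
  · simpa using hRtop.const_sub M

theorem stmt16_general (hV : Integrable V P) (hVM : ∀ᵐ ω ∂P, V ω ≤ M)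
    (hVpos : ∀ y < M, 0 < P {ω | V ω > y}) (hσ : 0 < σ) (hN : 2 ≤ N) {α k : ℝ} (hα : 0 < α)
    (hk : 0 < k)
    (hlim : Tendsto (fun x ↦ (Psip P V x - x) / (M - x) ^ (α + 1)) (𝓝[<] M) (𝓝 (1 / k)))
    (hRm : Monotone R) (hRM : ∀ x, R x < M) (hRtop : Tendsto R atTop (𝓝 M))
    (hR : SolvesCp P V σ N R) :
    Tendsto (fun x ↦ (M - R x) /
      (((N : ℝ) / (N - 1) * (α / k)) ^ (-1 / α) * Real.log x ^ (-1 / α))) atTop (𝓝 1) := by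
  obtain ⟨w, S, h⟩ := hR.gapSystem hV hVM hVpos hσ hN hRm hRM hRtop
  have hgap : Tendsto (fun x ↦ (M - R x - (M - Psip P V (R x))) / (M - R x) ^ (α + 1)) atTop
      (𝓝 (1 / k)) := by
    simpa only [sub_sub_sub_cancel_left, Function.comp_def] using
      hlim.comp (tendsto_nhdsWithin_iff.2 ⟨hRtop, .of_forall hRM⟩)
  have hconst : α * (1 / k / (1 - 1 / (N : ℝ))) = N / (N - 1) * (α / k) := by
    have hN0 : (N : ℝ) ≠ 0 := by positivity
    rw [one_sub_div hN0]
    field_simp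
  simpa only [hconst] using h.tendsto_div_rpow_log hα (by positivity) hgap

end EquationCp

/-- If `N ≥ 2`, `Π⁺` is `C¹` on `(m,M)`, `Ψ⁺ₓ(M) = 1` and
`(Ψ⁺(x) − x)/(M − x)^{n+1} → 1/k` as `x → M⁻` for some `n ≥ 1` and `k ∈ (0,∞)`, then any
nondecreasing solution `R` of (C⁺) with `R < M` and `R → M` at `∞` satisfies
`M − R(x) ∼ ((N/(N−1))·(n/k))^{−1/n}·(log x)^{−1/n}` as `x → ∞`. -/
theorem stmt16 {Ω : Type*} [MeasurableSpace Ω] (P : Measure Ω) [IsProbabilityMeasure P]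
    (V : Ω → ℝ) (hVmeas : Measurable V) (hV : Integrable V P)
    (m M : ℝ) (hsupp : SuppIoo P V m M)
    (σ : ℝ) (hσ : 0 < σ) (N : ℕ) (hN : 2 ≤ N)
    (hC1 : ContDiffOn ℝ 1 (Pip P V) (Set.Ioo m M))
    (hL : Tendsto (deriv (Psip P V)) (nhdsWithin M (Set.Iio M)) (nhds 1))
    (n : ℕ) (hn : 1 ≤ n) (k : ℝ) (hk : 0 < k)
    (hlim : Tendsto (fun x : ℝ => (Psip P V x - x) / (M - x) ^ (n + 1))
      (nhdsWithin M (Set.Iio M)) (nhds (1 / k)))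
    (R : ℝ → ℝ) (hRm : Monotone R) (hRr : ∀ x, R x ∈ Set.Icc m M)
    (hRlt : ∀ x, R x < M) (hRtop : Tendsto R atTop (nhds M))
    (hRsol : SolvesCp P V σ N R) :
    Tendsto (fun x : ℝ => (M - R x) /
        ((((N:ℝ) / ((N:ℝ) - 1)) * ((n:ℝ) / k)) ^ (-(1:ℝ) / (n:ℝ)) *
          Real.log x ^ (-(1:ℝ) / (n:ℝ))))
      atTop (nhds 1) := by
  exact_mod_cast stmt16_general (α := n) hV (hsupp.2.1.mono fun _ h ↦ h.2) hsupp.2.2.1 hσ hN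
    (by exact_mod_cast hn) hk (by exact_mod_cast hlim) hRm hRlt hRtop hRsol
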